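/- Let n ≥ 1 be an odd integer, A = 𝔽₂[x]/(x^{n+1}), and B = A ⊗_{𝔽₂} A. The graded ring HH^*(A;A) = ⊕_{m≥0} Ext^m_B(A,A), with the Yoneda (composition) product, is isomorphic as a graded ring to 𝔽₂[x,v,t]/(x^{n+1}, v² − ((n+1)/2)·t·x^{n−1}), where x, v, t have cohomological degrees 0, 1, 2 respectively and (n+1)/2 is reduced modulo 2. -/

import Mathlib

open Polynomial TensorProduct CategoryTheory

noncomputable section

/-- `A = 𝔽₂[x]/(x^{n+1})`, the truncated polynomial ring over `𝔽₂ = ℤ/2ℤ`. -/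
abbrev A (n : ℕ) : Type := AdjoinRoot ((X : (ZMod 2)[X]) ^ (n + 1))

/-- `B = A ⊗_{𝔽₂} A`. -/
abbrev B (n : ℕ) : Type := A n ⊗[ZMod 2] A n

/-- `A` is a `B`-module via the multiplication map `μ(a ⊗ b) = ab`. -/
instance (n : ℕ) : Algebra (B n) (A n) :=
  (Algebra.TensorProduct.lmul' (ZMod 2) (S := A n)).toRingHom.toAlgebra

instance (n : ℕ) : HasDerivedCategory.{1} (ModuleCat.{0} (B n)) :=
  HasDerivedCategory.standard _

instance (n : ℕ) : HasExt.{1} (ModuleCat.{0} (B n)) :=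
  hasExt_of_hasDerivedCategory _

/-- `A` as an object of the category of `B`-modules. -/
def M (n : ℕ) : ModuleCat.{0} (B n) := ModuleCat.of (B n) (A n)

/-- The ideal `(x^{n+1}, v² − ((n+1)/2)·t·x^{n−1})` of `𝔽₂[x,v,t]`, where `x = X 0`,
`v = X 1`, `t = X 2`, and `(n+1)/2` is reduced modulo `2`. -/
def I (n : ℕ) : Ideal (MvPolynomial (Fin 3) (ZMod 2)) :=
  Ideal.span {MvPolynomial.X 0 ^ (n + 1),
    MvPolynomial.X 1 ^ 2 -
      ((((n + 1) / 2 : ℕ) : MvPolynomial (Fin 3) (ZMod 2)) *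
        MvPolynomial.X 2 * MvPolynomial.X 0 ^ (n - 1))}

/-- The ring `𝔽₂[x,v,t]/(x^{n+1}, v² − ((n+1)/2)·t·x^{n−1})`. -/
abbrev R (n : ℕ) : Type := MvPolynomial (Fin 3) (ZMod 2) ⧸ I n

/-- The degree-`m` component of `R n`, for the grading in which `x, v, t` have
cohomological degrees `0, 1, 2` respectively. -/
def G (n m : ℕ) : Submodule (ZMod 2) (R n) :=
  (MvPolynomial.weightedHomogeneousSubmodule (ZMod 2) (![0, 1, 2] : Fin 3 → ℕ) m).map
    (Ideal.Quotient.mkₐ (ZMod 2) (I n)).toLinearMap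


lemma hh_exists_desc {S P Q Z : Type} [CommRing S] [AddCommGroup P] [Module S P]
    [AddCommGroup Q] [Module S Q] [AddCommGroup Z] [Module S Z]
    (p : P →ₗ[S] Q) (f : P →ₗ[S] Z) (hp : Function.Surjective p)
    (h : ∀ x, p x = 0 → f x = 0) : ∃ g : Q →ₗ[S] Z, ∀ x, g (p x) = f x := by
  refine ⟨(Submodule.liftQ (LinearMap.ker p) f (fun x hx => h x hx)) ∘ₗ
    (p.quotKerEquivOfSurjective hp).symm.toLinearMap, fun x => ?_⟩
  have : (p.quotKerEquivOfSurjective hp).symm (p x) = Submodule.Quotient.mk x := by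
    rw [LinearEquiv.symm_apply_eq]; rfl
  simp only [LinearMap.comp_apply, LinearEquiv.coe_coe, this]
  exact Submodule.liftQ_apply _ _ _

/-- The structure constants. -/
def hhc {S : Type*} [One S] (w : S) : ℕ → ℕ → S
  | 0, _ => 1
  | 1, 0 => 1
  | 1, 1 => w
  | 1, (b+2) => hhc w 1 b
  | (a+2), b => hhc w a b

section generic
open Abelian

lemma hh_mult {S : Type} [CommRing S] [HasExt.{1} (ModuleCat.{0} S)] (M : ModuleCat.{0} S)
    (w : S) (v : Ext M M 1) (t : Ext M M 2) (T : ∀ m, Ext M M m)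
    (h0 : T 0 = Ext.mk₀ (𝟙 M)) (h1 : T 1 = v)
    (hT : ∀ m, T (m+2) = t.comp (T m) (by omega))
    (hvv : v.comp v rfl = w • t)
    (hvt : v.comp t rfl = t.comp v rfl)
    (a b c : ℕ) (h : a + b = c) : (T a).comp (T b) h = hhc w a b • T c := by
  induction a using Nat.twoStepInduction generalizing b c with
  | zero => obtain rfl : b = c := by omega
            simp [h0, hhc]
  | one =>
    induction b using Nat.twoStepInduction generalizing c with
    | zero =>
      obtain rfl : 1 = c := by omega
      simp [h0, hhc]
    | one =>
      obtain rfl : 2 = c := by omega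
      have : T 2 = t := by rw [hT 0, h0]; simp
      rw [h1, this]; simpa [hhc] using hvv
    | more b ih _ =>
      obtain rfl : b + 1 + 2 = c := by omega
      rw [hT b, hT (b+1), ← Ext.comp_assoc (a₁₂ := 3) _ _ _ (by omega) (by omega) (by omega), h1]
      have e : v.comp t (by omega : 1 + 2 = 3) = t.comp v (by omega) := hvt
      rw [e, Ext.comp_assoc (a₂₃ := b + 1) _ _ _ (by omega) (by omega) (by omega)]
      rw [← h1, ih (b+1) (by omega)]
      simp [hhc]
  | more a ih _ =>
    obtain rfl : a + b + 2 = c := by omega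
    rw [hT a, hT (a+b), Ext.comp_assoc (a₂₃ := a + b) _ _ _ (by omega) (by omega) (by omega),
      ih b (a+b) rfl]
    simp [hhc]

lemma hh_generic {S A' : Type} [CommRing S] [CommRing A'] [Algebra S A']
    [HasExt.{1} (ModuleCat.{0} S)]
    (hs : Function.Surjective (algebraMap S A')) (δ w : S)
    (hk : ∀ b : S, algebraMap S A' b = 0 ↔ ∃ c, b = δ * c)
    (hN : ∀ b : S, δ * w * b = 0 ↔ algebraMap S A' b = 0)
    (hδ : ∀ b : S, δ * b = 0 ↔ ∃ c, b = δ * w * c) :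
    ∃ T : ∀ m, Ext (ModuleCat.of S A') (ModuleCat.of S A') m, T 0 = Ext.mk₀ (𝟙 _) ∧
      (∀ m α, ∃ b : S, α = b • T m) ∧
      (∀ m (b : S), b • T m = 0 ↔ algebraMap S A' b = 0) ∧
      (∀ a b c h, (T a).comp (T b) h = hhc w a b • T c) := by
  let π : S →ₗ[S] A' := Algebra.linearMap S A'
  have hπ : ∀ b, π b = algebraMap S A' b := fun b => rfl
  have hπδ : π δ = 0 := (hk δ).2 ⟨1, by simp⟩
  have hπsm : ∀ b c : S, π (b * c) = b • π c := fun b c => by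
    rw [← smul_eq_mul, map_smul]
  have hπN : ∀ c, π (δ * w * c) = 0 := fun c => (hk _).2 ⟨w * c, by ring⟩
  let K : Submodule S S := LinearMap.ker π
  have hKmem : ∀ b, δ * b ∈ K := fun b => (hk _).2 ⟨b, rfl⟩
  let q : S →ₗ[S] K := LinearMap.codRestrict K (LinearMap.mulLeft S δ) hKmem
  have hq : ∀ b, (q b : S) = δ * b := fun b => rfl
  have hqs : Function.Surjective q := by
    rintro ⟨x, hx⟩
    obtain ⟨c, rfl⟩ := (hk x).1 hx
    exact ⟨c, rfl⟩
  have hq0 : ∀ b, q b = 0 → ∃ c, b = δ * w * c := fun b hb =>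
    (hδ b).1 (by rw [← hq, hb]; rfl)
  obtain ⟨j, hj⟩ := hh_exists_desc π (LinearMap.mulLeft S (δ * w)) hs (fun x hx => (hN x).2 hx)
  obtain ⟨φ, hφ⟩ := hh_exists_desc q π hqs (fun x hx => by
    obtain ⟨c, rfl⟩ := hq0 x hx; exact hπN c)
  obtain ⟨ψ, hψ⟩ := hh_exists_desc π (q ∘ₗ LinearMap.mulLeft S w) hs (fun x hx => by
    apply Subtype.ext
    change δ * (w * x) = 0
    rw [← mul_assoc]; exact (hN x).2 hx)
  let AA := ModuleCat.of S A'
  let BB := ModuleCat.of S S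
  let KK := ModuleCat.of S K
  let S1 : ShortComplex (ModuleCat.{0} S) :=
    ShortComplex.mk (X₁ := KK) (X₂ := BB) (X₃ := AA) (ModuleCat.ofHom K.subtype)
      (ModuleCat.ofHom π) (by ext x; exact x.2)
  let S2 : ShortComplex (ModuleCat.{0} S) :=
    ShortComplex.mk (X₁ := AA) (X₂ := BB) (X₃ := KK) (ModuleCat.ofHom j)
      (ModuleCat.ofHom q) (by
        ext x
        obtain ⟨y, rfl⟩ := hs x
        change ((q (j (π y)) : K) : S) = 0
        rw [hj]
        exact (hδ _).2 ⟨y, rfl⟩)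
  have hS1 : S1.ShortExact := by
    refine ShortComplex.ShortExact.mk' ?_ ?_ ?_
    · rw [ShortComplex.moduleCat_exact_iff]
      intro x hx
      exact ⟨⟨x, hx⟩, rfl⟩
    · rw [ModuleCat.mono_iff_injective]; exact Subtype.val_injective
    · rw [ModuleCat.epi_iff_surjective]; exact hs
  have hS2 : S2.ShortExact := by
    refine ShortComplex.ShortExact.mk' ?_ ?_ ?_
    · rw [ShortComplex.moduleCat_exact_iff]
      intro x hx
      obtain ⟨c, rfl⟩ := hq0 x hx
      exact ⟨π c, hj c⟩
    · rw [ModuleCat.mono_iff_injective]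
      refine (injective_iff_map_eq_zero j).2 ?_
      intro a ha
      obtain ⟨y, rfl⟩ := hs a
      change j (π y) = 0 at ha
      rw [hj] at ha
      exact (hN y).1 ha
    · rw [ModuleCat.epi_iff_surjective]; exact hqs
  have : Projective BB := ModuleCat.projective_of_free (Module.Basis.singleton Unit S)
  let e1 : Ext AA KK 1 := hS1.extClass
  let e2 : Ext KK AA 1 := hS2.extClass
  let t : Ext AA AA 2 := e1.comp e2 rfl
  let v : Ext AA AA 1 := e1.comp (Ext.mk₀ (ModuleCat.ofHom φ)) rfl
  -- naturality
  let F21 : S2 ⟶ S1 :=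
    { τ₁ := ModuleCat.ofHom ψ
      τ₂ := 𝟙 BB
      τ₃ := ModuleCat.ofHom φ
      comm₁₂ := by
        ext x
        obtain ⟨y, rfl⟩ := hs x
        change ((ψ (π y) : K) : S) = j (π y)
        rw [hψ, hj]
        change δ * (w * y) = δ * w * y
        ring
      comm₂₃ := by
        refine ModuleCat.hom_ext (LinearMap.ext fun x => ?_)
        exact (hφ x).symm }
  let F12 : S1 ⟶ S2 :=
    { τ₁ := ModuleCat.ofHom φ
      τ₂ := ModuleCat.ofHom (LinearMap.mulLeft S w)
      τ₃ := ModuleCat.ofHom ψ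
      comm₁₂ := by
        refine ModuleCat.hom_ext (LinearMap.ext fun x => ?_)
        obtain ⟨y, rfl⟩ := hqs x
        change j (φ (q y)) = w * (δ * y)
        rw [hφ, hj]
        change δ * w * y = w * (δ * y)
        ring
      comm₂₃ := by
        refine ModuleCat.hom_ext (LinearMap.ext fun x => ?_)
        exact (hψ x).symm }
  have n21 : e2.comp (Ext.mk₀ (ModuleCat.ofHom ψ)) (add_zero 1) =
      (Ext.mk₀ (ModuleCat.ofHom φ)).comp e1 (zero_add 1) :=
    ShortComplex.ShortExact.extClass_naturality hS2 hS1 F21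
  have n12 : e1.comp (Ext.mk₀ (ModuleCat.ofHom φ)) (add_zero 1) =
      (Ext.mk₀ (ModuleCat.ofHom ψ)).comp e2 (zero_add 1) :=
    ShortComplex.ShortExact.extClass_naturality hS1 hS2 F12
  have hψφ : (ModuleCat.ofHom ψ : AA ⟶ KK) ≫ (ModuleCat.ofHom φ : KK ⟶ AA) = w • 𝟙 AA := by
    refine ModuleCat.hom_ext (LinearMap.ext fun x => ?_)
    obtain ⟨y, rfl⟩ := hs x
    change φ (ψ (π y)) = w • π y
    rw [hψ, LinearMap.comp_apply, hφ]
    exact hπsm w y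
  have hvv : v.comp v rfl = w • t := by
    change (e1.comp (Ext.mk₀ (ModuleCat.ofHom φ)) (add_zero 1)).comp
      (e1.comp (Ext.mk₀ (ModuleCat.ofHom φ)) (add_zero 1)) (rfl : 1 + 1 = 2) = w • t
    rw [Ext.comp_assoc_of_second_deg_zero,
      ← Ext.comp_assoc (a₁₂ := 1) (Ext.mk₀ (ModuleCat.ofHom φ)) e1 _ (by omega) (by omega)
        (by omega), ← n21,
      Ext.comp_assoc_of_second_deg_zero, Ext.mk₀_comp_mk₀, hψφ, Ext.mk₀_smul, Ext.comp_smul,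
      Ext.comp_smul, Ext.comp_mk₀_id]
  have hvt : v.comp t rfl = t.comp v rfl := by
    change (e1.comp (Ext.mk₀ (ModuleCat.ofHom φ)) (add_zero 1)).comp
      (e1.comp e2 rfl) (rfl : 1 + 2 = 3) = (e1.comp e2 rfl).comp
        (e1.comp (Ext.mk₀ (ModuleCat.ofHom φ)) (add_zero 1)) (rfl : 2 + 1 = 3)
    rw [Ext.comp_assoc_of_second_deg_zero,
      ← Ext.comp_assoc (a₁₂ := 1) (Ext.mk₀ (ModuleCat.ofHom φ)) e1 _ (by omega) (by omega)
        (by omega), ← n21,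
      Ext.comp_assoc_of_second_deg_zero, ← n12,
      Ext.comp_assoc (a₂₃ := 2) e1 e2 _ (by omega) (by omega) (by omega)]
  -- injectivity and surjectivity of composition with e1, e2
  have e1surj : ∀ m (α : Ext AA AA (m+1)), ∃ β : Ext KK AA m, e1.comp β (by omega) = α := by
    intro m α
    exact Ext.contravariant_sequence_exact₃ hS1 AA α (Ext.eq_zero_of_projective (P := BB) _)
      (by omega)
  have e2surj : ∀ m (α : Ext KK AA (m+1)), ∃ β : Ext AA AA m, e2.comp β (by omega) = α := by
    intro m α
    exact Ext.contravariant_sequence_exact₃ hS2 AA α (Ext.eq_zero_of_projective (P := BB) _)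
      (by omega)
  have e1inj : ∀ m (α : Ext KK AA (m+1)), e1.comp α (by omega : 1 + (m+1) = m + 2) = 0 → α = 0 := by
    intro m α h
    obtain ⟨γ, rfl⟩ := Ext.contravariant_sequence_exact₁ hS1 AA α _ h
    rw [Ext.eq_zero_of_projective (P := BB) γ, Ext.comp_zero]
  have e2inj : ∀ m (α : Ext AA AA m), e2.comp α (by omega : 1 + m = m + 1) = 0 → α = 0 := by
    intro m α h
    obtain ⟨γ, rfl⟩ := Ext.contravariant_sequence_exact₁ hS2 AA α _ h
    cases m with
    | zero =>
      obtain ⟨g, rfl⟩ := (Ext.mk₀_bijective _ _).2 γ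
      rw [Ext.mk₀_comp_mk₀, Ext.mk₀_eq_zero_iff]
      refine ModuleCat.hom_ext (LinearMap.ext fun x => ?_)
      obtain ⟨y, rfl⟩ := hs x
      change g.hom (j (π y)) = 0
      have : j (π y) = (δ * w * y) • (1 : S) := by rw [hj]; simp [mul_assoc]
      rw [this, map_smul]
      obtain ⟨z, hz⟩ := hs (g.hom (1 : S))
      rw [← hz]
      change (δ * w * y) • π z = 0
      rw [← hπsm, show δ * w * y * z = δ * w * (y * z) by ring]
      exact hπN _
    | succ m =>
      rw [Ext.eq_zero_of_projective (P := BB) γ, Ext.comp_zero]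
  have assoc_t : ∀ m (α : Ext AA AA m), t.comp α (by omega : 2 + m = m + 2) =
      e1.comp (e2.comp α (by omega : 1 + m = m + 1)) (by omega) := fun m α =>
    Ext.comp_assoc (a₂₃ := m + 1) e1 e2 α _ _ (by omega)
  have tinj : ∀ m (α : Ext AA AA m), t.comp α (by omega : 2 + m = m + 2) = 0 → α = 0 := by
    intro m α h
    rw [assoc_t] at h
    exact e2inj m α (e1inj m _ h)
  have tsurj : ∀ m (α : Ext AA AA (m+2)), ∃ β : Ext AA AA m, t.comp β (by omega) = α := by
    intro m α
    obtain ⟨β, rfl⟩ := e1surj (m+1) α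
    obtain ⟨γ, rfl⟩ := e2surj m β
    exact ⟨γ, assoc_t m γ⟩
  let T : ∀ m, Ext AA AA m := fun m => Nat.twoStepInduction
    (motive := fun m => Ext AA AA m) (Ext.mk₀ (𝟙 _)) v
    (fun m x _ => t.comp x (by omega)) m
  have T0 : T 0 = Ext.mk₀ (𝟙 _) := rfl
  have T1 : T 1 = v := rfl
  have TT : ∀ m, T (m+2) = t.comp (T m) (by omega) := fun m => rfl
  clear_value T
  have smul_zero' : ∀ m (b : S) (α : Ext AA AA m), algebraMap S A' b = 0 → b • α = 0 := by
    intro m b α hb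
    rw [Ext.smul_eq_comp_mk₀]
    have : b • 𝟙 AA = 0 := by
      refine ModuleCat.hom_ext (LinearMap.ext fun (x : A') => ?_)
      change b • x = 0
      rw [Algebra.smul_def, hb, zero_mul]
    rw [this, Ext.mk₀_zero, Ext.comp_zero]
  refine ⟨T, T0, ?_, ?_, hh_mult AA w v t T T0 T1 TT hvv hvt⟩
  · intro m
    induction m using Nat.twoStepInduction with
    | zero =>
      intro α
      obtain ⟨g, rfl⟩ := (Ext.mk₀_bijective _ _).2 α
      obtain ⟨b, hb⟩ := hs (g.hom (1 : A'))
      refine ⟨b, ?_⟩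
      rw [T0, ← Ext.mk₀_smul]
      congr 1
      refine ModuleCat.hom_ext (LinearMap.ext fun (x : A') => ?_)
      obtain ⟨y, rfl⟩ := hs x
      change g.hom (algebraMap S A' y) = b • algebraMap S A' y
      rw [Algebra.algebraMap_eq_smul_one, map_smul, ← hb, smul_comm, Algebra.algebraMap_eq_smul_one]
    | one =>
      intro α
      obtain ⟨β, rfl⟩ := e1surj 0 α
      obtain ⟨g, rfl⟩ := (Ext.mk₀_bijective _ _).2 β
      obtain ⟨b, hb⟩ := hs (g.hom (q 1))
      refine ⟨b, ?_⟩
      rw [T1]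
      change _ = b • e1.comp (Ext.mk₀ (ModuleCat.ofHom φ)) (add_zero 1)
      rw [← Ext.comp_smul, ← Ext.mk₀_smul]
      congr 2
      refine ModuleCat.hom_ext (LinearMap.ext fun (x : K) => ?_)
      obtain ⟨y, rfl⟩ := hqs x
      change g.hom (q y) = b • φ (q y)
      have : q y = y • q 1 := by rw [← map_smul]; simp
      rw [this, map_smul, map_smul, ← hb, hφ, smul_comm]
      congr 1
      change π b = _
      rw [← hπsm, mul_one]
    | more m ih _ =>
      intro α
      obtain ⟨β, rfl⟩ := tsurj m α
      obtain ⟨b, rfl⟩ := ih β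
      exact ⟨b, by rw [TT, Ext.comp_smul]⟩
  · intro m b
    refine ⟨?_, smul_zero' m b _⟩
    induction m using Nat.twoStepInduction with
    | zero =>
      intro h
      rw [T0, ← Ext.mk₀_smul, Ext.mk₀_eq_zero_iff] at h
      have h2 : b • (1 : A') = 0 := by
        change (b • 𝟙 AA : AA ⟶ AA).hom (1 : A') = 0
        rw [h]; rfl
      rwa [Algebra.algebraMap_eq_smul_one]
    | one =>
      intro h
      rw [T1] at h
      change b • e1.comp (Ext.mk₀ (ModuleCat.ofHom φ)) (add_zero 1) = 0 at h
      rw [← Ext.comp_smul, ← Ext.mk₀_smul] at h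
      obtain ⟨γ, hγ⟩ := Ext.contravariant_sequence_exact₁ hS1 AA _ _ h
      obtain ⟨g, rfl⟩ := (Ext.mk₀_bijective _ _).2 γ
      rw [Ext.mk₀_comp_mk₀] at hγ
      have h3 := (Ext.mk₀_bijective _ _).1 hγ
      have h4 : g.hom ((q 1 : K) : S) = b • φ (q 1) := by
        change (S1.f ≫ g).hom (q 1) = _
        rw [h3]; rfl
      have h5 : ((q 1 : K) : S) = δ • (1 : S) := rfl
      rw [h5, map_smul, hφ, ← hπsm, mul_one] at h4
      rw [← hπ, ← h4]
      obtain ⟨z, hz⟩ := hs (g.hom (1 : S))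
      rw [← hz]
      change δ • π z = 0
      rw [← hπsm]
      exact hKmem z
    | more m ih _ =>
      intro h
      rw [TT, ← Ext.comp_smul] at h
      exact ih (tinj m _ h)

end generic

section concrete
variable (n : ℕ)

/-- the element `x ⊗ 1`. -/
def hx1 : B n := AdjoinRoot.root _ ⊗ₜ 1
/-- the element `1 ⊗ x`. -/
def hy1 : B n := 1 ⊗ₜ AdjoinRoot.root _

/-- `δ = x ⊗ 1 - 1 ⊗ x`. -/
def hδ : B n := hx1 n - hy1 n

lemma hroot_pow : (AdjoinRoot.root ((X : (ZMod 2)[X]) ^ (n + 1))) ^ (n+1) = 0 := by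
  have := AdjoinRoot.mk_self (f := (X : (ZMod 2)[X]) ^ (n + 1))
  rwa [map_pow, AdjoinRoot.mk_X] at this

lemma hx1_pow (i : ℕ) : hx1 n ^ i = (AdjoinRoot.root _ ^ i) ⊗ₜ 1 := by
  simp [hx1, Algebra.TensorProduct.tmul_pow]
lemma hy1_pow (i : ℕ) : hy1 n ^ i = 1 ⊗ₜ (AdjoinRoot.root _ ^ i) := by
  simp [hy1, Algebra.TensorProduct.tmul_pow]

lemma hmu (b : B n) : algebraMap (B n) (A n) b = Algebra.TensorProduct.lmul' (ZMod 2) (S := A n) b :=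
  rfl
lemma hmu_tmul (a b : A n) : algebraMap (B n) (A n) (a ⊗ₜ b) = a * b := by
  rw [hmu]; simp

lemma hmu_surj : Function.Surjective (algebraMap (B n) (A n)) := fun a => ⟨a ⊗ₜ 1, by
  rw [hmu_tmul, mul_one]⟩

lemma hmu_ker (b : B n) : algebraMap (B n) (A n) b = 0 ↔ ∃ c, b = hδ n * c := by
  constructor
  · intro h
    have h1 : b ∈ KaehlerDifferential.ideal (ZMod 2) (A n) := h
    rw [← KaehlerDifferential.span_range_eq_ideal] at h1
    have h2 : Ideal.span (Set.range fun s : A n => (1 : A n) ⊗ₜ[ZMod 2] s - s ⊗ₜ[ZMod 2] (1 : A n))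
        ≤ Ideal.span {hδ n} := by
      rw [Ideal.span_le]
      rintro _ ⟨s, rfl⟩
      obtain ⟨p, rfl⟩ := AdjoinRoot.mk_surjective s
      rw [SetLike.mem_coe, Ideal.mem_span_singleton]
      have e1 : (1 : A n) ⊗ₜ[ZMod 2] (AdjoinRoot.mk _ p : A n) = aeval (hy1 n) p := by
        have := Polynomial.aeval_algHom_apply
          (Algebra.TensorProduct.includeRight : A n →ₐ[ZMod 2] B n) (AdjoinRoot.root _) p
        rw [AdjoinRoot.aeval_eq] at this
        exact this.symm
      have e2 : (AdjoinRoot.mk _ p : A n) ⊗ₜ[ZMod 2] (1 : A n) = aeval (hx1 n) p := by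
        have := Polynomial.aeval_algHom_apply
          (Algebra.TensorProduct.includeLeft : A n →ₐ[ZMod 2] B n) (AdjoinRoot.root _) p
        rw [AdjoinRoot.aeval_eq] at this
        exact this.symm
      beta_reduce
      rw [e1, e2, ← neg_dvd, hδ, neg_sub]
      have := Polynomial.sub_dvd_eval_sub (hy1 n) (hx1 n) (p.map (algebraMap (ZMod 2) (B n)))
      rwa [Polynomial.eval_map_algebraMap, Polynomial.eval_map_algebraMap] at this
    have := h2 h1
    rw [Ideal.mem_span_singleton] at this
    exact this
  · rintro ⟨c, rfl⟩
    rw [map_mul, hδ, map_sub, hx1, hy1, hmu_tmul, hmu_tmul]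
    simp

/-- the element `w` with `δ w = N`. -/
def hw (j : ℕ) : B n := ∑ i ∈ Finset.range (j+1), (hx1 n ^ 2) ^ i * (hy1 n ^ 2) ^ (j - i)

lemma hmu_w (j : ℕ) : algebraMap (B n) (A n) (hw n j) =
    ((j + 1 : ℕ) : A n) * AdjoinRoot.root _ ^ (2 * j) := by
  have : ∀ i ∈ Finset.range (j+1), algebraMap (B n) (A n) ((hx1 n ^ 2) ^ i * (hy1 n ^ 2) ^ (j - i))
      = AdjoinRoot.root _ ^ (2 * j) := by
    intro i hi
    rw [Finset.mem_range] at hi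
    rw [← pow_mul, ← pow_mul, map_mul, hx1_pow, hy1_pow, hmu_tmul, hmu_tmul, mul_one, one_mul,
      ← pow_add]
    congr 1; omega
  rw [hw, map_sum, Finset.sum_congr rfl this]
  simp

instance : CharP (B n) 2 := by
  have : Nontrivial (A n) := AdjoinRoot.nontrivial _ (by
    rw [degree_X_pow]; exact_mod_cast Nat.succ_ne_zero n)
  exact charP_of_injective_algebraMap (algebraMap (ZMod 2) (B n)).injective 2

lemma hδδw (j : ℕ) (hj : n = 2 * j + 1) : hδ n * hδ n * hw n j = 0 := by
  have h1 : hδ n * hδ n = hx1 n ^ 2 - hy1 n ^ 2 := by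
    rw [hδ, ← pow_two, sub_pow_char]
  have h2 := (Commute.all (hx1 n ^ 2) (hy1 n ^ 2)).mul_geom_sum₂ (j+1)
  rw [h1]
  have h3 : n + 1 = 2 * (j + 1) := by omega
  have := hroot_pow n
  rw [← pow_mul (hx1 n), ← pow_mul (hy1 n), ← h3, hx1_pow n (n+1), hy1_pow n (n+1), this,
    zero_tmul, tmul_zero, sub_zero] at h2
  exact h2

/-- top coefficient functional on the second factor. -/
def hL : B n →ₗ[ZMod 2] A n :=
  (TensorProduct.rid (ZMod 2) (A n)).toLinearMap ∘ₗ
    LinearMap.lTensor (A n) (Polynomial.lcoeff (ZMod 2) n ∘ₗ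
      AdjoinRoot.modByMonicHom (Polynomial.monic_X_pow (n+1)))

lemma hL_apply (a : A n) (i : ℕ) (hi : i ≤ n) :
    hL n (a ⊗ₜ (AdjoinRoot.root _ ^ i)) = if i = n then a else 0 := by
  have h1 : AdjoinRoot.modByMonicHom (Polynomial.monic_X_pow (R := ZMod 2) (n+1))
      (AdjoinRoot.root _ ^ i) = X ^ i := by
    have : (AdjoinRoot.root ((X : (ZMod 2)[X]) ^ (n + 1))) ^ i = AdjoinRoot.mk _ (X ^ i) := by simp
    rw [this, AdjoinRoot.modByMonicHom_mk, Polynomial.modByMonic_eq_self_iff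
      (Polynomial.monic_X_pow (n+1))]
    rw [degree_X_pow, degree_X_pow]
    exact_mod_cast Nat.lt_succ_of_le hi
  simp only [hL, LinearMap.comp_apply, LinearMap.lTensor_tmul, h1]
  rw [Polynomial.lcoeff_apply, coeff_X_pow]
  simp [eq_comm]

lemma hL_N (j : ℕ) (hj : n = 2 * j + 1) (a : A n) : hL n (hδ n * hw n j * a ⊗ₜ 1) = - a := by
  have : ∀ i ∈ Finset.range (j+1), hL n (hδ n * ((hx1 n ^ 2) ^ i * (hy1 n ^ 2) ^ (j - i)) * a ⊗ₜ 1)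
      = if i = 0 then - a else 0 := by
    intro i hi
    rw [Finset.mem_range] at hi
    have e : hδ n * ((hx1 n ^ 2) ^ i * (hy1 n ^ 2) ^ (j - i)) * a ⊗ₜ 1 =
      ((AdjoinRoot.root _ ^ (2 * i + 1) * a) ⊗ₜ (AdjoinRoot.root _ ^ (2 * (j-i)))) -
      ((AdjoinRoot.root _ ^ (2 * i) * a) ⊗ₜ (AdjoinRoot.root _ ^ (2 * (j-i) + 1))) := by
      have : hδ n * ((hx1 n ^ 2) ^ i * (hy1 n ^ 2) ^ (j - i)) =
        hx1 n ^ (2 * i + 1) * hy1 n ^ (2 * (j-i)) - hx1 n ^ (2 * i) * hy1 n ^ (2 * (j-i) + 1) := by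
        rw [hδ]; ring
      rw [this, sub_mul]
      simp only [hx1_pow, hy1_pow, Algebra.TensorProduct.tmul_mul_tmul, one_mul, mul_one]
    rw [e, map_sub, hL_apply _ _ _ (by omega), hL_apply _ _ _ (by omega)]
    rw [if_neg (by omega)]
    by_cases h : i = 0
    · subst h
      rw [if_pos (by omega), if_pos rfl]; simp
    · rw [if_neg (by omega), if_neg h]; simp
  rw [hw, Finset.mul_sum, Finset.sum_mul, map_sum, Finset.sum_congr rfl this]
  simp

lemma hN_iff (j : ℕ) (hj : n = 2 * j + 1) (b : B n) :
    hδ n * hw n j * b = 0 ↔ algebraMap (B n) (A n) b = 0 := by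
  have key : ∀ c, hδ n * hw n j * (hδ n * c) = 0 := fun c => by
    rw [show hδ n * hw n j * (hδ n * c) = hδ n * hδ n * hw n j * c by ring, hδδw n j hj, zero_mul]
  constructor
  · intro h
    obtain ⟨c, hc⟩ := (hmu_ker n (b - (algebraMap (B n) (A n) b) ⊗ₜ 1)).1 (by
      rw [map_sub, hmu_tmul]; simp)
    have e : hδ n * hw n j * (algebraMap (B n) (A n) b) ⊗ₜ 1 = 0 := by
      have := key c
      rw [← hc, mul_sub, h, zero_sub, neg_eq_zero] at this
      exact this
    have := hL_N n j hj (algebraMap (B n) (A n) b)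
    rw [e, map_zero] at this
    exact neg_eq_zero.1 this.symm
  · intro h
    obtain ⟨c, rfl⟩ := (hmu_ker n b).1 h
    exact key c

lemma hδ_iff (j : ℕ) (hj : n = 2 * j + 1) (b : B n) :
    hδ n * b = 0 ↔ ∃ c, b = hδ n * hw n j * c := by
  have : Module.Finite (ZMod 2) (A n) := (Polynomial.monic_X_pow (n+1)).finite_adjoinRoot
  let f : B n →ₗ[ZMod 2] B n := LinearMap.mulLeft (ZMod 2) (hδ n)
  let g : B n →ₗ[ZMod 2] B n := LinearMap.mulLeft (ZMod 2) (hδ n * hw n j)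
  have h1 : LinearMap.range f = LinearMap.ker g := by
    ext x
    rw [LinearMap.mem_ker]
    change _ ↔ hδ n * hw n j * x = 0
    rw [hN_iff n j hj, hmu_ker]
    constructor
    · rintro ⟨c, rfl⟩; exact ⟨c, rfl⟩
    · rintro ⟨c, rfl⟩; exact ⟨c, rfl⟩
  have h2 : LinearMap.range g = LinearMap.ker f := by
    apply Submodule.eq_of_le_of_finrank_eq
    · rintro _ ⟨c, rfl⟩
      change hδ n * (hδ n * hw n j * c) = 0
      rw [show hδ n * (hδ n * hw n j * c) = hδ n * hδ n * hw n j * c by ring, hδδw n j hj, zero_mul]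
    · have e1 := LinearMap.finrank_range_add_finrank_ker f
      have e2 := LinearMap.finrank_range_add_finrank_ker g
      rw [h1] at e1
      omega
  have : b ∈ LinearMap.range g ↔ b ∈ LinearMap.ker f := by rw [h2]
  change b ∈ LinearMap.ker f ↔ _
  rw [← this]
  constructor
  · rintro ⟨c, rfl⟩; exact ⟨c, rfl⟩
  · rintro ⟨c, rfl⟩; exact ⟨c, rfl⟩

end concrete

section target
variable (n : ℕ)

lemma hhc_map {S S' : Type*} [CommRing S] [CommRing S'] (f : S →+* S') (w : S) (a b : ℕ) :
    f (hhc w a b) = hhc (f w) a b := by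
  fun_induction hhc w a b <;> simp_all [hhc]

/-- class of `x`. -/
def rx : R n := Ideal.Quotient.mk (I n) (MvPolynomial.X 0)
/-- class of `v`. -/
def rv : R n := Ideal.Quotient.mk (I n) (MvPolynomial.X 1)
/-- class of `t`. -/
def rt : R n := Ideal.Quotient.mk (I n) (MvPolynomial.X 2)

lemma rx_pow : rx n ^ (n+1) = 0 := by
  rw [rx, ← map_pow, Ideal.Quotient.eq_zero_iff_mem]
  exact Ideal.subset_span (by simp)

lemma rv_sq : rv n * rv n = (((n + 1) / 2 : ℕ) : R n) * rx n ^ (n - 1) * rt n := by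
  have : Ideal.Quotient.mk (I n) (MvPolynomial.X 1 ^ 2 -
      ((((n + 1) / 2 : ℕ) : MvPolynomial (Fin 3) (ZMod 2)) *
        MvPolynomial.X 2 * MvPolynomial.X 0 ^ (n - 1))) = 0 := by
    rw [Ideal.Quotient.eq_zero_iff_mem]
    exact Ideal.subset_span (by simp)
  rw [map_sub, map_mul, map_mul, map_pow, map_pow, map_natCast, sub_eq_zero] at this
  rw [← pow_two]
  change rv n ^ 2 = _ * rt n * rx n ^ (n-1) at this
  rw [this]; ring

/-- The map `A → R`. -/
def rι : A n →+* R n := AdjoinRoot.lift (algebraMap (ZMod 2) (R n)) (rx n) (by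
  rw [Polynomial.eval₂_pow, Polynomial.eval₂_X]; exact rx_pow n)

lemma rι_root : rι n (AdjoinRoot.root _) = rx n := AdjoinRoot.lift_root _

/-- normal form monomials in degree `m`. -/
def rS : ℕ → R n
  | 0 => 1
  | 1 => rv n
  | (m+2) => rt n * rS m

lemma rS_mul (κ : R n) (h : rv n * rv n = κ * rt n) (a b : ℕ) :
    rS n a * rS n b = hhc κ a b * rS n (a + b) := by
  induction a using Nat.twoStepInduction generalizing b with
  | zero => simp [rS, hhc]
  | one =>
    induction b using Nat.twoStepInduction with
    | zero => simp [rS, hhc]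
    | one => simp [rS, hhc, h]
    | more b ih _ =>
      rw [show 1 + (b + 2) = (1 + b) + 2 by ring]
      simp only [rS, hhc] at ih ⊢
      rw [mul_left_comm, ih]; ring
  | more a ih _ =>
    rw [show a + 2 + b = (a + b) + 2 by ring]
    simp only [rS, hhc]
    rw [mul_assoc, ih]; ring

/-- polynomial representatives. -/
def rP : ℕ → MvPolynomial (Fin 3) (ZMod 2)
  | 0 => 1
  | 1 => MvPolynomial.X 1
  | (m+2) => MvPolynomial.X 2 * rP m

lemma rP_mk (m : ℕ) : Ideal.Quotient.mk (I n) (rP m) = rS n m := by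
  induction m using Nat.twoStepInduction with
  | zero => simp [rP, rS]
  | one => simp [rP, rS, rv]
  | more m ih _ => simp [rP, rS, rt, ih]

lemma rP_hom (m : ℕ) : (rP m).IsWeightedHomogeneous (![0, 1, 2] : Fin 3 → ℕ) m := by
  induction m using Nat.twoStepInduction with
  | zero => exact MvPolynomial.isWeightedHomogeneous_one _ _
  | one => exact MvPolynomial.isWeightedHomogeneous_X (ZMod 2) (![0, 1, 2] : Fin 3 → ℕ) 1
  | more m ih _ =>
    have := (MvPolynomial.isWeightedHomogeneous_X (ZMod 2) (![0, 1, 2] : Fin 3 → ℕ) 2).mul ih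
    rw [show (![0, 1, 2] : Fin 3 → ℕ) 2 + m = m + 2 from add_comm 2 m] at this
    exact this

lemma rι_mem (a : A n) (m : ℕ) : rι n a * rS n m ∈ G n m := by
  obtain ⟨p, rfl⟩ := AdjoinRoot.mk_surjective a
  induction p using Polynomial.induction_on' with
  | add p q hp hq => rw [map_add, map_add, add_mul]; exact add_mem hp hq
  | monomial i c =>
    have e : rι n (AdjoinRoot.mk _ (monomial i c)) * rS n m = c • (rx n ^ i * rS n m) := by
      rw [rι, AdjoinRoot.lift_mk, eval₂_monomial, mul_assoc]
      exact (Algebra.smul_def c _).symm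
    rw [e]
    refine Submodule.smul_mem _ _ ⟨MvPolynomial.X 0 ^ i * rP m, ?_, ?_⟩
    · have h0 := (MvPolynomial.isWeightedHomogeneous_X (ZMod 2) (![0, 1, 2] : Fin 3 → ℕ) 0).pow i
      have := h0.mul (rP_hom m)
      simpa using this
    · change Ideal.Quotient.mk (I n) (MvPolynomial.X 0 ^ i * rP m) = _
      rw [map_mul, rP_mk, map_pow]; rfl

lemma rt_pow (k m : ℕ) : rt n ^ k * rS n m = rS n (m + 2 * k) := by
  induction k with
  | zero => simp
  | succ k ih =>
    rw [show m + 2 * (k + 1) = (m + 2 * k) + 2 by ring, rS, ← ih]; ring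

lemma rv_pow (κ : A n) (h : rv n * rv n = rι n κ * rt n) (k : ℕ) :
    ∃ a, rv n ^ k = rι n a * rS n k := by
  induction k with
  | zero => exact ⟨1, by simp [rS]⟩
  | succ k ih =>
    obtain ⟨a, ha⟩ := ih
    have := rS_mul n _ h 1 k
    rw [← hhc_map, add_comm 1 k] at this
    refine ⟨a * hhc κ 1 k, ?_⟩
    rw [map_mul, mul_assoc, ← this, pow_succ', ha, rS]; ring

lemma rι_surj (κ : A n) (h : rv n * rv n = rι n κ * rt n) (m : ℕ) (y : R n) (hy : y ∈ G n m) :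
    ∃ a, y = rι n a * rS n m := by
  obtain ⟨p, hp, rfl⟩ := hy
  let f : A n →+ R n := (AddMonoidHom.mulRight (rS n m)).comp (rι n).toAddMonoidHom
  suffices Ideal.Quotient.mk (I n) p ∈ f.range by
    obtain ⟨a, ha⟩ := this
    exact ⟨a, ha.symm⟩
  rw [p.as_sum, map_sum]
  refine sum_mem fun d hd => ?_
  have hw := hp (MvPolynomial.mem_support_iff.1 hd)
  rw [Finsupp.weight_apply, Finsupp.sum_fintype _ _ (by simp)] at hw
  simp [Fin.sum_univ_three] at hw
  obtain ⟨a, ha⟩ := rv_pow n κ h (d 1)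
  refine ⟨algebraMap (ZMod 2) (A n) (p.coeff d) * AdjoinRoot.root _ ^ (d 0) * a, ?_⟩
  change rι n _ * rS n m = _
  have hc : rι n (algebraMap (ZMod 2) (A n) (p.coeff d)) =
      Ideal.Quotient.mk (I n) (MvPolynomial.C (p.coeff d)) := AdjoinRoot.lift_of _
  rw [MvPolynomial.monomial_eq, Finsupp.prod_fintype _ _ (by simp), Fin.prod_univ_three]
  simp only [map_mul, map_pow]
  change _ = _ * (rx n ^ d 0 * rv n ^ d 1 * rt n ^ d 2)
  rw [hc, rι_root, ha, ← hw, mul_comm (d 2) 2, ← rt_pow]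
  ring

lemma rι_inj (a : A n) (m : ℕ) (h : rι n a * rS n m = 0) : a = 0 := by
  have nt : Nontrivial (A n) := AdjoinRoot.nontrivial _ (by
    rw [degree_X_pow]; exact_mod_cast Nat.succ_ne_zero n)
  let κ : A n := (((n + 1) / 2 : ℕ) : A n) * AdjoinRoot.root _ ^ (n - 1)
  let f : (A n)[X][X] := X ^ 2 - C (C κ * X)
  have hf : f.Monic := monic_X_pow_sub_C _ (by norm_num)
  have hdeg : f.degree = 2 := degree_X_pow_sub_C (by norm_num) _
  let i : A n →+* AdjoinRoot f := (AdjoinRoot.of f).comp C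
  let Φ0 : MvPolynomial (Fin 3) (ZMod 2) →+* AdjoinRoot f :=
    MvPolynomial.eval₂Hom (i.comp (algebraMap (ZMod 2) (A n)))
      ![i (AdjoinRoot.root _), AdjoinRoot.root f, AdjoinRoot.of f X]
  have hroot : AdjoinRoot.root f ^ 2 = i κ * AdjoinRoot.of f X := by
    have := AdjoinRoot.mk_self (f := f)
    simp only [f, map_sub, map_pow, AdjoinRoot.mk_X, AdjoinRoot.mk_C, sub_eq_zero] at this
    simpa [i] using this
  have hΦ0 : ∀ p ∈ I n, Φ0 p = 0 := by
    intro p hp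
    have : I n ≤ RingHom.ker Φ0 := by
      rw [I, Ideal.span_le]
      rintro q (rfl | rfl)
      · rw [SetLike.mem_coe, RingHom.mem_ker, map_pow]
        simp only [Φ0, MvPolynomial.coe_eval₂Hom, MvPolynomial.eval₂_X]
        change i _ ^ (n+1) = 0
        rw [← map_pow]
        have := AdjoinRoot.mk_self (f := (X : (ZMod 2)[X]) ^ (n + 1))
        rw [map_pow, AdjoinRoot.mk_X] at this
        rw [this, map_zero]
      · rw [SetLike.mem_coe, RingHom.mem_ker, map_sub, map_mul, map_mul, map_pow, map_pow,
          map_natCast]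
        simp only [Φ0, MvPolynomial.coe_eval₂Hom, MvPolynomial.eval₂_X]
        change AdjoinRoot.root f ^ 2 - _ * AdjoinRoot.of f X * i _ ^ (n-1) = 0
        rw [hroot]
        simp only [κ, map_mul, map_natCast, map_pow]
        ring
    exact this hp
  let Φ : R n →+* AdjoinRoot f := Ideal.Quotient.lift (I n) Φ0 hΦ0
  have hΦx : Φ (rx n) = i (AdjoinRoot.root _) := by
    change Φ0 (MvPolynomial.X 0) = _
    simp [Φ0]
  have hΦv : Φ (rv n) = AdjoinRoot.root f := by
    change Φ0 (MvPolynomial.X 1) = _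
    simp [Φ0]
  have hΦt : Φ (rt n) = AdjoinRoot.of f X := by
    change Φ0 (MvPolynomial.X 2) = _
    simp [Φ0]
  have hΦι : ∀ a, Φ (rι n a) = i a := by
    intro a
    obtain ⟨p, rfl⟩ := AdjoinRoot.mk_surjective a
    have : (Φ.comp (rι n)).comp (AdjoinRoot.mk _) = i.comp (AdjoinRoot.mk _) := by
      refine Polynomial.ringHom_ext (fun c => ?_) ?_
      · have : (((Φ.comp (rι n)).comp (AdjoinRoot.mk _)).comp C : ZMod 2 →+* _) =
          (i.comp (AdjoinRoot.mk _)).comp C := Subsingleton.elim _ _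
        exact congrArg (fun g => g c) this
      · simp [rι_root, hΦx]
    exact congrArg (fun g => g p) this
  have hS : ∃ k, ∃ ε < 2, Φ (rS n m) = AdjoinRoot.mk f (C (X ^ k) * X ^ ε) := by
    clear h
    induction m using Nat.twoStepInduction with
    | zero => exact ⟨0, 0, by norm_num, by simp [rS]⟩
    | one => exact ⟨0, 1, by norm_num, by simp [rS, hΦv]⟩
    | more m ih _ =>
      obtain ⟨k, ε, hε, e⟩ := ih
      refine ⟨k+1, ε, hε, ?_⟩
      rw [rS, map_mul, e, hΦt, ← AdjoinRoot.mk_C, ← map_mul, pow_succ' X k, map_mul C, mul_assoc]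
  obtain ⟨k, ε, hε, e⟩ := hS
  have h1 : AdjoinRoot.mk f (C (C a * X ^ k) * X ^ ε) = 0 := by
    have := congrArg Φ h
    rw [map_mul, hΦι, e, map_zero] at this
    rw [← this, map_mul C, mul_assoc, map_mul (AdjoinRoot.mk f)]
    rfl
  rw [AdjoinRoot.mk_eq_zero] at h1
  have h2 : C (C a * X ^ k : (A n)[X]) * X ^ ε = 0 := by
    by_contra hne
    refine hf.not_dvd_of_degree_lt hne ?_ h1
    rw [hdeg]
    refine lt_of_le_of_lt (degree_C_mul_X_pow_le _ _) ?_
    exact_mod_cast hε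
  have h3 := congrArg (fun p => (p.coeff ε).coeff k) h2
  simp only [coeff_C_mul, coeff_X_pow_self, mul_one, coeff_zero] at h3
  exact h3

end target

lemma hh_glue {S X Y : Type*} [AddCommGroup S] [AddCommGroup X] [AddCommGroup Y]
    (f : S →+ X) (g : S →+ Y) (hf : Function.Surjective f) (hg : Function.Surjective g)
    (h : ∀ b, f b = 0 ↔ g b = 0) : ∃ e : X ≃+ Y, ∀ b, e (f b) = g b := by
  have hker : f.ker = g.ker := by ext b; exact h b
  refine ⟨(QuotientAddGroup.quotientKerEquivOfSurjective f hf).symm.trans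
    ((QuotientAddGroup.quotientAddEquivOfEq hker).trans
      (QuotientAddGroup.quotientKerEquivOfSurjective g hg)), fun b => ?_⟩
  have : (QuotientAddGroup.quotientKerEquivOfSurjective f hf).symm (f b) =
      QuotientAddGroup.mk b := by
    rw [AddEquiv.symm_apply_eq]; rfl
  simp only [AddEquiv.trans_apply, this]
  rfl

/-- for odd `n ≥ 1` and `A = 𝔽₂[x]/(x^{n+1})`, the graded ring
`HH^*(A;A) = ⊕ₘ Ext^m_B(A,A)` with the Yoneda (composition) product is isomorphic as a
graded ring to `𝔽₂[x,v,t]/(x^{n+1}, v² − ((n+1)/2)·t·x^{n−1})` with `x, v, t` in degrees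
`0, 1, 2`. -/
theorem stmt12 (n : ℕ) (hn : 1 ≤ n) (hodd : Odd n) :
    ∃ e : ∀ m : ℕ, Abelian.Ext (M n) (M n) m ≃+ G n m,
      ((e 0 (Abelian.Ext.mk₀ (𝟙 (M n))) : R n) = 1) ∧
      ∀ (a b : ℕ) (α : Abelian.Ext (M n) (M n) a) (β : Abelian.Ext (M n) (M n) b),
        ((e (a + b) (α.comp β rfl) : R n) = (e a α : R n) * (e b β : R n)) := by
  obtain ⟨j, hj⟩ := hodd
  obtain ⟨T, T0, Tsurj, Tker, Tmul⟩ :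
    ∃ T : ∀ m, Abelian.Ext (M n) (M n) m, T 0 = Abelian.Ext.mk₀ (𝟙 _) ∧
      (∀ m α, ∃ b : B n, α = b • T m) ∧
      (∀ m (b : B n), b • T m = 0 ↔ algebraMap (B n) (A n) b = 0) ∧
      (∀ a b c h, (T a).comp (T b) h = hhc (hw n j) a b • T c) :=
    hh_generic (hmu_surj n) (hδ n) (hw n j) (hmu_ker n)
    (hN_iff n j hj) (hδ_iff n j hj)
  let ρ : B n →+* R n := (rι n).comp (algebraMap (B n) (A n))
  have hρ : ∀ b, ρ b = rι n (algebraMap (B n) (A n) b) := fun b => rfl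
  have hvv : rv n * rv n = rι n (algebraMap (B n) (A n) (hw n j)) * rt n := by
    rw [rv_sq, hmu_w, map_mul, map_natCast, map_pow, rι_root,
      show (n + 1) / 2 = j + 1 by omega, show n - 1 = 2 * j by omega]
  let g : ∀ m, B n →+ G n m := fun m =>
    AddMonoidHom.mk' (fun b => ⟨ρ b * rS n m, rι_mem n _ m⟩) (fun a b => by
      apply Subtype.ext
      change ρ (a + b) * rS n m = ρ a * rS n m + ρ b * rS n m
      rw [map_add, add_mul])
  have hg : ∀ m b, (g m b : R n) = ρ b * rS n m := fun m b => rfl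
  let f : ∀ m, B n →+ Abelian.Ext (M n) (M n) m := fun m =>
    AddMonoidHom.mk' (fun b => b • T m) (fun a b => add_smul a b (T m))
  have hf : ∀ m b, f m b = b • T m := fun m b => rfl
  have fsurj : ∀ m, Function.Surjective (f m) := fun m α => by
    obtain ⟨b, hb⟩ := Tsurj m α
    exact ⟨b, hb.symm⟩
  have key : ∀ m, ∃ e : Abelian.Ext (M n) (M n) m ≃+ G n m, ∀ b, e (f m b) = g m b := by
    intro m
    refine hh_glue (f m) (g m) (fsurj m) ?_ ?_
    · rintro ⟨y, hy⟩
      obtain ⟨a, rfl⟩ := rι_surj n _ hvv m y hy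
      obtain ⟨b, rfl⟩ := hmu_surj n a
      exact ⟨b, rfl⟩
    · intro b
      refine (Tker m b).trans ?_
      constructor
      · intro h
        apply Subtype.ext
        rw [hg, hρ, h]; simp
      · intro h
        have := congrArg Subtype.val h
        rw [hg] at this
        exact rι_inj n _ m this
  choose e he using key
  refine ⟨e, ?_, ?_⟩
  · have h1 : Abelian.Ext.mk₀ (𝟙 (M n)) = f 0 1 := by
      rw [hf, one_smul]; exact T0.symm
    rw [h1, he, hg, map_one, one_mul]; rfl
  · intro a b α β
    obtain ⟨p, rfl⟩ := fsurj a α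
    obtain ⟨q, rfl⟩ := fsurj b β
    have h1 : (f a p).comp (f b q) rfl = f (a + b) (p * q * hhc (hw n j) a b) := by
      rw [hf, hf, hf, Abelian.Ext.smul_comp, Abelian.Ext.comp_smul, mul_smul, mul_smul]
      exact congrArg (fun z => p • q • z) (Tmul a b _ rfl)
    rw [h1, he, he, he, hg, hg, hg, map_mul, map_mul, hρ (hhc _ _ _), hhc_map, hhc_map]
    have := rS_mul n _ hvv a b
    rw [mul_assoc (ρ p * ρ q), ← this]; ring

end
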